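/- arXiv:math/9806011 — 3 statements merged into one kernel-verified Lean document; each statement's English description precedes it below -/
import Mathlib

section
/- The entrywise reduction-modulo-2 map on Sp(Λ₃,ℤ) is a group homomorphism onto the symplectic group Sp(4,𝔽₂) = {h ∈ GL(4,𝔽₂) : hᵀ J̄ h = J̄}, where J̄ (the reduction of Λ₃ mod 2) is the matrix over 𝔽₂ with rows (0,0,1,0), (0,0,0,1), (1,0,0,0), (0,1,0,0); this map is surjective and its kernel is Sp⁽²⁾(Λ₃,ℤ). -/
/-! Reduction is compatible with matrix products and `Λ₃ ≡ J̄ (mod 2)`, so the image of `Sp(Λ₃,ℤ)`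
lies in `Sp(4,𝔽₂)`; the description of the kernel is an entrywise comparison.

For surjectivity, every transvection `x ↦ x + ⟨u,x⟩u` of `𝔽₂⁴` lifts to the integral transvection
`x ↦ x + (ũᵀ Λ₃ x) ũ`, where `ũ` is any integral lift of `u`; it preserves `Λ₃` because `Λ₃` is
alternating (`exists_transvection`).  It remains to see that `Sp(4,𝔽₂)` is generated by
transvections.  If `⟨v,w⟩ = 1`, the transvection along `v + w` sends `v` to `w` and fixes every `x`
with `⟨x,v⟩ = ⟨x,w⟩` (`exists_move`), and two such moves suffice to carry the columns of a
symplectic matrix, taken in the order `0, 2, 1, 3`, one after another to the standard basis vectors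
without disturbing those already in place.  The number `3` enters only through being odd. -/

open Matrix

/-- The subgroup of `GL(4,R)` preserving the bilinear form given by the matrix `A`,
i.e. matrices `g` with `gᵀ A g = A`. -/
def symplOf {R : Type*} [CommRing R] (A : Matrix (Fin 4) (Fin 4) R) :
    Subgroup (GL (Fin 4) R) where
  carrier := {g | (g : Matrix (Fin 4) (Fin 4) R)ᵀ * A * (g : Matrix (Fin 4) (Fin 4) R) = A}
  one_mem' := by simp
  mul_mem' := by
    intro a b ha hb
    simp only [Set.mem_setOf_eq] at ha hb ⊢
    rw [Units.val_mul, transpose_mul]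
    calc (b : Matrix (Fin 4) (Fin 4) R)ᵀ * (a : Matrix (Fin 4) (Fin 4) R)ᵀ * A *
          ((a : Matrix (Fin 4) (Fin 4) R) * (b : Matrix (Fin 4) (Fin 4) R))
        = (b : Matrix (Fin 4) (Fin 4) R)ᵀ *
            ((a : Matrix (Fin 4) (Fin 4) R)ᵀ * A * (a : Matrix (Fin 4) (Fin 4) R)) *
            (b : Matrix (Fin 4) (Fin 4) R) := by noncomm_ring
      _ = A := by rw [ha, hb]
  inv_mem' := by
    intro a ha
    simp only [Set.mem_setOf_eq] at ha ⊢
    have h1 : ((a : Matrix (Fin 4) (Fin 4) R) * ((a⁻¹ : GL (Fin 4) R) : Matrix (Fin 4) (Fin 4) R)) = 1 :=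
      Units.mul_inv a
    calc ((a⁻¹ : GL (Fin 4) R) : Matrix (Fin 4) (Fin 4) R)ᵀ * A *
          ((a⁻¹ : GL (Fin 4) R) : Matrix (Fin 4) (Fin 4) R)
        = ((a⁻¹ : GL (Fin 4) R) : Matrix (Fin 4) (Fin 4) R)ᵀ *
            ((a : Matrix (Fin 4) (Fin 4) R)ᵀ * A * (a : Matrix (Fin 4) (Fin 4) R)) *
            ((a⁻¹ : GL (Fin 4) R) : Matrix (Fin 4) (Fin 4) R) := by rw [ha]
      _ = ((a : Matrix (Fin 4) (Fin 4) R) * ((a⁻¹ : GL (Fin 4) R) : Matrix (Fin 4) (Fin 4) R))ᵀ * A *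
            ((a : Matrix (Fin 4) (Fin 4) R) * ((a⁻¹ : GL (Fin 4) R) : Matrix (Fin 4) (Fin 4) R)) := by
          rw [transpose_mul]; noncomm_ring
      _ = A := by rw [h1]; simp

/-- The symplectic-type form `Λ₃` of a `(1,3)`-polarization. -/
def Lambda3 : Matrix (Fin 4) (Fin 4) ℤ :=
  !![0, 0, 1, 0; 0, 0, 0, 3; -1, 0, 0, 0; 0, -3, 0, 0]

/-- `Sp(Λ₃,ℤ)`: the group of `4 × 4` integer matrices `g` with `gᵀ Λ₃ g = Λ₃`
(such matrices are automatically invertible over `ℤ`). -/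
def SpLambda3 : Subgroup (GL (Fin 4) ℤ) := symplOf Lambda3

/-- The reduction of `Λ₃` modulo 2. -/
def JbarF2 : Matrix (Fin 4) (Fin 4) (ZMod 2) :=
  !![0, 0, 1, 0; 0, 0, 0, 1; 1, 0, 0, 0; 0, 1, 0, 0]

/-- `Sp(4,𝔽₂)`: the group of `4 × 4` matrices `h` over `𝔽₂` with `hᵀ J̄ h = J̄`. -/
def Sp4F2 : Subgroup (GL (Fin 4) (ZMod 2)) := symplOf JbarF2

/-- The entrywise reduction-modulo-2 group homomorphism. -/
noncomputable def redMod2 : GL (Fin 4) ℤ →* GL (Fin 4) (ZMod 2) :=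
  Matrix.GeneralLinearGroup.map (Int.castRingHom (ZMod 2))

/-- The symplectic form on `𝔽₂⁴` with Gram matrix `J̄`, written in coordinates. -/
def formF2 (x y : Fin 4 → ZMod 2) : ZMod 2 :=
  x 0 * y 2 + x 1 * y 3 + x 2 * y 0 + x 3 * y 1

/-- The matrix of the transvection `x ↦ x + (uᵀ Λ₃ x) u` over `ℤ`. -/
def transvZ (u : Fin 4 → ℤ) : Matrix (Fin 4) (Fin 4) ℤ :=
  1 + vecMulVec u (u ᵥ* Lambda3)

lemma Lambda3_map : Lambda3.map (Int.castRingHom (ZMod 2)) = JbarF2 := by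
  decide

lemma redMod2_val (g : GL (Fin 4) ℤ) :
    (redMod2 g : Matrix (Fin 4) (Fin 4) (ZMod 2)) =
      (g : Matrix (Fin 4) (Fin 4) ℤ).map (Int.castRingHom (ZMod 2)) := rfl

lemma vecMul_Lambda3 (u : Fin 4 → ℤ) :
    u ᵥ* Lambda3 = ![-u 2, -3 * u 3, u 0, 3 * u 1] := by
  ext i
  fin_cases i <;> simp [Lambda3, vecMul, dotProduct, Fin.sum_univ_four, mul_comm]

lemma vecMul_Lambda3_dotProduct_self (u : Fin 4 → ℤ) : (u ᵥ* Lambda3) ⬝ᵥ u = 0 := by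
  simp [vecMul_Lambda3, dotProduct, Fin.sum_univ_four]
  ring

lemma transvZ_mul_inv (u : Fin 4 → ℤ) :
    transvZ u * (1 - vecMulVec u (u ᵥ* Lambda3)) = 1 := by
  have h : vecMulVec u (u ᵥ* Lambda3) * vecMulVec u (u ᵥ* Lambda3) = 0 := by
    rw [vecMulVec_mul_vecMulVec, vecMul_Lambda3_dotProduct_self]
    simp
  rw [transvZ, add_mul, mul_sub, mul_sub, h]
  simp

lemma transvZ_sympl (u : Fin 4 → ℤ) : (transvZ u)ᵀ * Lambda3 * transvZ u = Lambda3 := by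
  rw [transvZ, vecMul_Lambda3]
  ext i j
  fin_cases i <;> fin_cases j <;>
    simp [Lambda3, Matrix.mul_apply, Fin.sum_univ_four, Matrix.one_apply] <;> ring

/-- Every transvection of `𝔽₂⁴` is the reduction of an element of `Sp(Λ₃,ℤ)`. -/
lemma exists_transvection (u : Fin 4 → ZMod 2) :
    ∃ t ∈ Subgroup.map redMod2 SpLambda3, ∀ x : Fin 4 → ZMod 2,
      (t : Matrix (Fin 4) (Fin 4) (ZMod 2)) *ᵥ x = x + formF2 u x • u := by
  choose a ha using fun i => ZMod.intCast_surjective (u i)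
  obtain rfl : (fun i => (a i : ZMod 2)) = u := funext ha
  let g : GL (Fin 4) ℤ := ⟨transvZ a, 1 - vecMulVec a (a ᵥ* Lambda3),
    transvZ_mul_inv a, mul_eq_one_comm.mp (transvZ_mul_inv a)⟩
  refine ⟨redMod2 g, ⟨g, transvZ_sympl a, rfl⟩, fun x => ?_⟩
  rw [redMod2_val]
  have h3 : (3 : ZMod 2) = 1 := by decide
  have hneg : ∀ y : ZMod 2, -y = y := by decide
  ext i
  fin_cases i <;>
    simp [g, transvZ, vecMul_Lambda3, mulVec, dotProduct, Fin.sum_univ_four,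
      Matrix.one_apply, formF2, h3, hneg] <;> ring

/-- If `⟨v,w⟩ = 1`, the transvection along `v + w` moves `v` to `w` and fixes every vector pairing
equally with `v` and `w`. -/
lemma exists_move (v w : Fin 4 → ZMod 2) (h : v = w ∨ formF2 v w = 1) :
    ∃ t ∈ Subgroup.map redMod2 SpLambda3,
      (t : Matrix (Fin 4) (Fin 4) (ZMod 2)) *ᵥ v = w ∧
      ∀ x, formF2 x v = formF2 x w → (t : Matrix (Fin 4) (Fin 4) (ZMod 2)) *ᵥ x = x := by
  rcases h with rfl | h
  · exact ⟨1, one_mem _, by simp, by simp⟩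
  obtain ⟨t, ht, hx⟩ := exists_transvection (v + w)
  have h2 : ∀ y : ZMod 2, y + y = 0 := by decide
  refine ⟨t, ht, ?_, fun x hxv => ?_⟩
  · have : formF2 (v + w) v = 1 := by
      rw [← h]
      simp only [formF2, Pi.add_apply]
      linear_combination h2 (v 0 * v 2) + h2 (v 1 * v 3)
    rw [hx, this]
    ext i
    simp only [Pi.add_apply, one_smul]
    linear_combination h2 (v i)
  · have : formF2 (v + w) x = 0 := by
      rw [← h2 (formF2 x w)]
      nth_rewrite 1 [← hxv]
      simp only [formF2, Pi.add_apply]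
      ring
    rw [hx, this]
    simp

/-- Two successive moves `v ↦ z ↦ w`, leaving a set `X` of vectors fixed pointwise. -/
lemma exists_move_via (X : Set (Fin 4 → ZMod 2)) (v z w : Fin 4 → ZMod 2)
    (hvz : v = z ∨ formF2 v z = 1) (hzw : z = w ∨ formF2 z w = 1)
    (hX : ∀ x ∈ X, formF2 x v = formF2 x z ∧ formF2 x z = formF2 x w) :
    ∃ t ∈ Subgroup.map redMod2 SpLambda3,
      (t : Matrix (Fin 4) (Fin 4) (ZMod 2)) *ᵥ v = w ∧
      ∀ x ∈ X, (t : Matrix (Fin 4) (Fin 4) (ZMod 2)) *ᵥ x = x := by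
  obtain ⟨s, hs, hsv, hsx⟩ := exists_move v z hvz
  obtain ⟨t, ht, htz, htx⟩ := exists_move z w hzw
  refine ⟨t * s, mul_mem ht hs, ?_, fun x hx => ?_⟩
  · rw [Units.val_mul, ← mulVec_mulVec, hsv, htz]
  · rw [Units.val_mul, ← mulVec_mulVec, hsx x (hX x hx).1, htx x (hX x hx).2]

lemma formF2_col {h : GL (Fin 4) (ZMod 2)} (hh : h ∈ Sp4F2) (i j : Fin 4) :
    formF2 (h.val.col i) (h.val.col j) = JbarF2 i j := by
  have h1 : h.valᵀ * JbarF2 * h.val = JbarF2 := hh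
  have h2 := congrFun (congrFun h1 i) j
  rw [← h2]
  simp [Matrix.mul_apply, Fin.sum_univ_four, JbarF2, formF2]
  ring

lemma col_mul (t h : GL (Fin 4) (ZMod 2)) (j : Fin 4) :
    (t * h).val.col j = t.val *ᵥ h.val.col j := by
  ext i
  simp [Matrix.mul_apply, mulVec, dotProduct]

/-- A nonzero vector orthogonal to `e₀` may need an intermediate vector on its way to `e₀`; the
analogous lemma below does the same for `e₂`, keeping the pairing with `e₀` equal to `1`. -/
lemma exists_via_zero : ∀ a b c d : ZMod 2, ¬ (a = 0 ∧ b = 0 ∧ c = 0 ∧ d = 0) →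
    ∃ p q r s : ZMod 2,
      (![a, b, c, d] = ![p, q, r, s] ∨ formF2 ![a, b, c, d] ![p, q, r, s] = 1) ∧
      (![p, q, r, s] = ![1, 0, 0, 0] ∨ formF2 ![p, q, r, s] ![1, 0, 0, 0] = 1) := by
  decide

lemma exists_via_two : ∀ a b c d : ZMod 2, formF2 ![1, 0, 0, 0] ![a, b, c, d] = 1 →
    ∃ p q r s : ZMod 2,
      (![a, b, c, d] = ![p, q, r, s] ∨ formF2 ![a, b, c, d] ![p, q, r, s] = 1) ∧
      (![p, q, r, s] = ![0, 0, 1, 0] ∨ formF2 ![p, q, r, s] ![0, 0, 1, 0] = 1) ∧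
      formF2 ![1, 0, 0, 0] ![p, q, r, s] = 1 := by
  decide

lemma eq_or_form_one : ∀ a b c d : ZMod 2, ¬ (a = 0 ∧ b = 0 ∧ c = 0 ∧ d = 0) →
    formF2 ![1, 0, 0, 0] ![a, b, c, d] = 0 → formF2 ![0, 0, 1, 0] ![a, b, c, d] = 0 →
    ![a, b, c, d] = ![0, 1, 0, 0] ∨ formF2 ![a, b, c, d] ![0, 1, 0, 0] = 1 := by
  decide

lemma eq_or_form_three : ∀ a b c d : ZMod 2,
    formF2 ![1, 0, 0, 0] ![a, b, c, d] = 0 → formF2 ![0, 0, 1, 0] ![a, b, c, d] = 0 →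
    formF2 ![0, 1, 0, 0] ![a, b, c, d] = 1 →
    ![a, b, c, d] = ![0, 0, 0, 1] ∨ formF2 ![a, b, c, d] ![0, 0, 0, 1] = 1 := by
  decide

lemma vec_eta (v : Fin 4 → ZMod 2) : ![v 0, v 1, v 2, v 3] = v := by
  ext i; fin_cases i <;> rfl

lemma col_ne_zero {h : GL (Fin 4) (ZMod 2)} (hh : h ∈ Sp4F2) (j : Fin 4) :
    ¬ (h.val.col j 0 = 0 ∧ h.val.col j 1 = 0 ∧ h.val.col j 2 = 0 ∧ h.val.col j 3 = 0) := by
  rintro ⟨h0, h1, h2, h3⟩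
  have key : ∀ i, JbarF2 i j = 0 := fun i => by
    rw [← formF2_col hh, formF2, h0, h1, h2, h3]; simp
  clear h0 h1 h2 h3
  revert key
  revert j
  decide

lemma map_le_Sp4F2 : Subgroup.map redMod2 SpLambda3 ≤ Sp4F2 := by
  rintro _ ⟨g, hg, rfl⟩
  have h1 : g.valᵀ * Lambda3 * g.val = Lambda3 := hg
  change (redMod2 g).valᵀ * JbarF2 * (redMod2 g).val = JbarF2
  rw [redMod2_val, ← Lambda3_map, ← transpose_map, ← Matrix.map_mul, ← Matrix.map_mul, h1]

lemma mem_of_cols_0213 {h : GL (Fin 4) (ZMod 2)}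
    (h0 : h.val.col 0 = ![1, 0, 0, 0]) (h2 : h.val.col 2 = ![0, 0, 1, 0])
    (h1 : h.val.col 1 = ![0, 1, 0, 0]) (h3 : h.val.col 3 = ![0, 0, 0, 1]) :
    h ∈ Subgroup.map redMod2 SpLambda3 := by
  have : h = 1 := by
    ext i j
    have e0 := congrFun h0 i
    have e1 := congrFun h1 i
    have e2 := congrFun h2 i
    have e3 := congrFun h3 i
    simp only [col_apply] at e0 e1 e2 e3
    fin_cases j
    · exact e0.trans (by fin_cases i <;> rfl)
    · exact e1.trans (by fin_cases i <;> rfl)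
    · exact e2.trans (by fin_cases i <;> rfl)
    · exact e3.trans (by fin_cases i <;> rfl)
  rw [this]
  exact one_mem _

/-- Once columns `0, 2, 1` are standard, column `3` is `e₃` or `e₃ + e₁`, and a transvection along
`e₁`, which fixes `e₀, e₂, e₁`, settles the second case. -/
lemma mem_of_cols_021 {h : GL (Fin 4) (ZMod 2)} (hh : h ∈ Sp4F2)
    (h0 : h.val.col 0 = ![1, 0, 0, 0]) (h2 : h.val.col 2 = ![0, 0, 1, 0])
    (h1 : h.val.col 1 = ![0, 1, 0, 0]) :
    h ∈ Subgroup.map redMod2 SpLambda3 := by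
  have f0 := formF2_col hh 0 3
  have f2 := formF2_col hh 2 3
  have f1 := formF2_col hh 1 3
  rw [h0] at f0
  rw [h2] at f2
  rw [h1] at f1
  have e := eq_or_form_three (h.val.col 3 0) (h.val.col 3 1) (h.val.col 3 2) (h.val.col 3 3)
  rw [vec_eta] at e
  obtain ⟨t, ht, htv, htx⟩ := exists_move _ _ (e f0 f2 f1)
  rw [← Subgroup.mul_mem_cancel_left _ ht]
  refine mem_of_cols_0213 ?_ ?_ ?_ ?_ <;> rw [col_mul]
  · rw [h0]; exact htx _ (f0.trans (by decide))
  · rw [h2]; exact htx _ (f2.trans (by decide))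
  · rw [h1]; exact htx _ (f1.trans (by decide))
  · exact htv

/-- Once columns `0` and `2` are standard, column `1` is a nonzero vector of the hyperbolic plane
spanned by `e₁, e₃`, so it is `e₁` or pairs to `1` with `e₁`. -/
lemma mem_of_cols_02 {h : GL (Fin 4) (ZMod 2)} (hh : h ∈ Sp4F2)
    (h0 : h.val.col 0 = ![1, 0, 0, 0]) (h2 : h.val.col 2 = ![0, 0, 1, 0]) :
    h ∈ Subgroup.map redMod2 SpLambda3 := by
  have f0 := formF2_col hh 0 1
  have f2 := formF2_col hh 2 1
  rw [h0] at f0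
  rw [h2] at f2
  have e := eq_or_form_one (h.val.col 1 0) (h.val.col 1 1) (h.val.col 1 2) (h.val.col 1 3)
    (col_ne_zero hh 1)
  rw [vec_eta] at e
  obtain ⟨t, ht, htv, htx⟩ := exists_move _ _ (e f0 f2)
  rw [← Subgroup.mul_mem_cancel_left _ ht]
  refine mem_of_cols_021 (mul_mem (map_le_Sp4F2 ht) hh) ?_ ?_ ?_ <;> rw [col_mul]
  · rw [h0]; exact htx _ (f0.trans (by decide))
  · rw [h2]; exact htx _ (f2.trans (by decide))
  · exact htv

lemma mem_of_cols_0 {h : GL (Fin 4) (ZMod 2)} (hh : h ∈ Sp4F2)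
    (h0 : h.val.col 0 = ![1, 0, 0, 0]) :
    h ∈ Subgroup.map redMod2 SpLambda3 := by
  have f0 := formF2_col hh 0 2
  rw [h0] at f0
  have e := exists_via_two (h.val.col 2 0) (h.val.col 2 1) (h.val.col 2 2) (h.val.col 2 3)
  rw [vec_eta] at e
  obtain ⟨p, q, r, s, hvz, hzw, hz⟩ := e f0
  obtain ⟨t, ht, htv, htx⟩ := exists_move_via {![1, 0, 0, 0]} _ _ _ hvz hzw (by
    rintro x rfl
    exact ⟨f0.trans hz.symm, hz.trans (by decide)⟩)
  rw [← Subgroup.mul_mem_cancel_left _ ht]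
  refine mem_of_cols_02 (mul_mem (map_le_Sp4F2 ht) hh) ?_ ?_ <;> rw [col_mul]
  · rw [h0]; exact htx _ rfl
  · exact htv

lemma Sp4F2_le_map : Sp4F2 ≤ Subgroup.map redMod2 SpLambda3 := by
  intro h hh
  have e := exists_via_zero _ _ _ _ (col_ne_zero hh 0)
  rw [vec_eta] at e
  obtain ⟨p, q, r, s, hvz, hzw⟩ := e
  obtain ⟨t, ht, htv, -⟩ := exists_move_via ∅ _ _ _ hvz hzw (by simp)
  rw [← Subgroup.mul_mem_cancel_left _ ht]
  refine mem_of_cols_0 (mul_mem (map_le_Sp4F2 ht) hh) ?_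
  rw [col_mul]
  exact htv

/-- The entrywise reduction-modulo-2 map on `Sp(Λ₃,ℤ)` is a group
homomorphism onto `Sp(4,𝔽₂)` (its image is exactly `Sp(4,𝔽₂)`), and its kernel is
`Sp⁽²⁾(Λ₃,ℤ)`, the subgroup of matrices congruent to the identity modulo 2. -/
theorem reduction_mod_two_onto_sp4F2 :
    Subgroup.map redMod2 SpLambda3 = Sp4F2 ∧
      ∀ g ∈ SpLambda3, (redMod2 g = 1 ↔
        ∀ i j, (g : Matrix (Fin 4) (Fin 4) ℤ) i j ≡
          (1 : Matrix (Fin 4) (Fin 4) ℤ) i j [ZMOD 2]) := by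
  refine ⟨le_antisymm map_le_Sp4F2 Sp4F2_le_map, fun g _ => ?_⟩
  have entry : ∀ i j, (redMod2 g : Matrix (Fin 4) (Fin 4) (ZMod 2)) i j =
      (1 : GL (Fin 4) (ZMod 2)).val i j ↔
      (g : Matrix (Fin 4) (Fin 4) ℤ) i j ≡ (1 : Matrix (Fin 4) (Fin 4) ℤ) i j [ZMOD 2] := by
    intro i j
    have h1 : (1 : GL (Fin 4) (ZMod 2)).val i j =
        (((1 : Matrix (Fin 4) (Fin 4) ℤ) i j : ℤ) : ZMod 2) := by
      by_cases hij : i = j <;> simp [Matrix.one_apply, hij]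
    rw [h1]
    exact ZMod.intCast_eq_intCast_iff _ _ 2
  constructor
  · intro h i j
    rw [← entry, h]
  · intro h
    ext i j
    exact (entry i j).mpr (h i j)
end

section
/- Let τ₁, τ₂, τ₃ ∈ ℂ with Im τ₁ > 0, Im τ₃ > 0, and Im τ₁ · Im τ₃ > (Im τ₂)². Then (1/2) · ∑_{(n,m)∈ℤ²} χ₄(n) χ₄(m) exp(πi(n²τ₁/4 + n m τ₂ + m² τ₃)) = ∑_{m=1}^∞ χ₄(m) · ϑ(τ₁, m τ₂) · exp(πi m² τ₃), both series converging absolutely. -/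
/-!
The terms are dominated by `exp (-π c (n² + m²))` for some `c > 0`, since the real quadratic form
`n² Im τ₁ / 4 + n m Im τ₂ + m² Im τ₃` has discriminant `(Im τ₂)² - Im τ₁ Im τ₃ < 0` and is
therefore positive definite. Hence the double series may be summed over `n` first. Only odd
`n = 2k + 1` contribute, where `χ₄(2k + 1) = (-1)^k`, and the sum over `k` is the theta series:
the inner sum is `G(m) = χ₄(m) ϑ(τ₁, m τ₂) exp(πi m² τ₃)`. The substitution `(n, m) ↦ (-n, -m)`
fixes every term because `χ₄` is odd, so `G` is even with `G(0) = 0`, and the sum of `G` over `ℤ`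
is twice its sum over `m ≥ 1`.
-/

open Complex

/-- The primitive Dirichlet character modulo 4: `χ₄(n) = 1` for `n ≡ 1 (mod 4)`,
`χ₄(n) = -1` for `n ≡ 3 (mod 4)`, and `χ₄(n) = 0` for even `n`. -/
noncomputable def chi4 (n : ℤ) : ℂ :=
  if n % 4 = 1 then 1 else if n % 4 = 3 then -1 else 0

/-- The Jacobi theta function with characteristic `(1/2, 1/2)`:
`ϑ(τ,z) = ∑_{n ∈ ℤ} (-1)ⁿ exp(πi(n+1/2)²τ + (2n+1)πiz)`. -/
noncomputable def jacobiTheta11 (τ z : ℂ) : ℂ :=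
  ∑' n : ℤ, (-1 : ℂ) ^ n *
    Complex.exp (Real.pi * Complex.I * ((n : ℂ) + 1 / 2) ^ 2 * τ +
      (2 * (n : ℂ) + 1) * Real.pi * Complex.I * z)

theorem chi4_neg (n : ℤ) : chi4 (-n) = -chi4 n := by
  unfold chi4
  split_ifs <;> first | omega | simp

theorem chi4_norm_le (n : ℤ) : ‖chi4 n‖ ≤ 1 := by
  unfold chi4
  split_ifs <;> simp

theorem chi4_odd (k : ℤ) : chi4 (2 * k + 1) = (-1 : ℂ) ^ k := by
  unfold chi4
  rcases Int.even_or_odd k with h | h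
  · rw [h.neg_one_zpow, if_pos]
    obtain ⟨j, rfl⟩ := h
    omega
  · rw [h.neg_one_zpow, if_neg, if_pos] <;> (obtain ⟨j, rfl⟩ := h; omega)

theorem chi4_zero : chi4 0 = 0 := by simp [chi4]

/-- The `(n, m)` term of the Fourier expansion of the degree 2 theta constant. -/
noncomputable def fourierTerm (τ₁ τ₂ τ₃ : ℂ) (n m : ℤ) : ℂ :=
  chi4 n * chi4 m * Complex.exp (Real.pi * Complex.I *
    ((n : ℂ) ^ 2 * τ₁ / 4 + (n : ℂ) * (m : ℂ) * τ₂ + (m : ℂ) ^ 2 * τ₃))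

/-- The `m`-th term of the Fourier–Jacobi expansion, for any integer `m`. -/
noncomputable def jacobiTerm (τ₁ τ₂ τ₃ : ℂ) (m : ℤ) : ℂ :=
  chi4 m * jacobiTheta11 τ₁ ((m : ℂ) * τ₂) * Complex.exp (Real.pi * Complex.I * (m : ℂ) ^ 2 * τ₃)

theorem fourierTerm_neg (τ₁ τ₂ τ₃ : ℂ) (n m : ℤ) :
    fourierTerm τ₁ τ₂ τ₃ (-n) (-m) = fourierTerm τ₁ τ₂ τ₃ n m := by
  simp [fourierTerm, chi4_neg]

/-- A binary quadratic form of negative discriminant is bounded below by a positive multiple of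
`x² + y²`. -/
theorem exists_posDef_bound {a b d : ℝ} (ha : 0 < a) (hd : 0 < d) (h : b ^ 2 < 4 * a * d) :
    ∃ c : ℝ, 0 < c ∧ ∀ x y : ℝ, c * (x ^ 2 + y ^ 2) ≤ a * x ^ 2 + b * (x * y) + d * y ^ 2 := by
  -- `c` is chosen so that `(a - c) (d - c) = b² / 4 + c²`, keeping the difference semidefinite
  obtain ⟨c, hc⟩ : ∃ c : ℝ, c * (4 * (a + d)) = 4 * a * d - b ^ 2 :=
    ⟨(4 * a * d - b ^ 2) / (4 * (a + d)), by field_simp⟩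
  have hc0 : 0 < c := by
    by_contra! hle
    nlinarith [mul_nonneg (neg_nonneg.2 hle) (add_pos ha hd).le]
  have hca : 0 < a - c := by
    by_contra! hle
    nlinarith [mul_nonneg (neg_nonneg.2 hle) (add_pos ha hd).le, sq_nonneg b, mul_pos ha ha]
  refine ⟨c, hc0, fun x y => ?_⟩
  have key : 0 ≤ (a - c) * ((a - c) * x ^ 2 + b * (x * y) + (d - c) * y ^ 2) := by
    have : (a - c) * ((a - c) * x ^ 2 + b * (x * y) + (d - c) * y ^ 2)
        = ((a - c) * x + b / 2 * y) ^ 2 + (c * y) ^ 2 := by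
      linear_combination (-y ^ 2 / 4) * hc
    rw [this]
    positivity
  have := nonneg_of_mul_nonneg_right key hca
  linarith

theorem summable_int_exp_neg_sq {c : ℝ} (hc : 0 < c) :
    Summable fun n : ℤ => Real.exp (-Real.pi * (c * (n : ℝ) ^ 2)) := by
  have := summable_pow_mul_jacobiTheta₂_term_bound 0 hc 0
  simpa using this

theorem norm_fourierTerm_le (τ₁ τ₂ τ₃ : ℂ) (n m : ℤ) :
    ‖fourierTerm τ₁ τ₂ τ₃ n m‖ ≤ Real.exp (-Real.pi *
      (τ₁.im / 4 * (n : ℝ) ^ 2 + τ₂.im * ((n : ℝ) * m) + τ₃.im * (m : ℝ) ^ 2)) := by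
  have hre : (Real.pi * Complex.I *
      ((n : ℂ) ^ 2 * τ₁ / 4 + (n : ℂ) * (m : ℂ) * τ₂ + (m : ℂ) ^ 2 * τ₃)).re = -Real.pi *
      (τ₁.im / 4 * (n : ℝ) ^ 2 + τ₂.im * ((n : ℝ) * m) + τ₃.im * (m : ℝ) ^ 2) := by
    have e : (Real.pi * Complex.I *
        ((n : ℂ) ^ 2 * τ₁ / 4 + (n : ℂ) * (m : ℂ) * τ₂ + (m : ℂ) ^ 2 * τ₃)) =
        Complex.I * (((Real.pi * (n : ℝ) ^ 2 / 4 : ℝ) : ℂ) * τ₁ +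
          ((Real.pi * ((n : ℝ) * m) : ℝ) : ℂ) * τ₂ +
          ((Real.pi * (m : ℝ) ^ 2 : ℝ) : ℂ) * τ₃) := by
      push_cast
      ring
    rw [e, Complex.I_mul_re]
    simp only [Complex.add_im, Complex.im_ofReal_mul]
    ring
  rw [fourierTerm, norm_mul, norm_mul, Complex.norm_exp, hre]
  exact mul_le_of_le_one_left (Real.exp_pos _).le
    (mul_le_one₀ (chi4_norm_le n) (norm_nonneg _) (chi4_norm_le m))

theorem summable_norm_fourierTerm {τ₁ τ₂ τ₃ : ℂ}
    (h1 : 0 < τ₁.im) (h3 : 0 < τ₃.im) (hpos : (τ₂.im) ^ 2 < τ₁.im * τ₃.im) :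
    Summable fun p : ℤ × ℤ => ‖fourierTerm τ₁ τ₂ τ₃ p.1 p.2‖ := by
  obtain ⟨c, hc, hb⟩ := exists_posDef_bound (a := τ₁.im / 4) (b := τ₂.im) (d := τ₃.im)
    (by positivity) h3 (by linarith)
  have hs := summable_int_exp_neg_sq hc
  refine Summable.of_nonneg_of_le (fun _ => norm_nonneg _) (fun p => ?_)
    (hs.mul_of_nonneg hs (fun _ => (Real.exp_pos _).le) (fun _ => (Real.exp_pos _).le))
  refine (norm_fourierTerm_le τ₁ τ₂ τ₃ p.1 p.2).trans ?_
  rw [← Real.exp_add]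
  apply Real.exp_le_exp.2
  nlinarith [mul_le_mul_of_nonneg_left (hb p.1 p.2) Real.pi_pos.le]

/-- Summing the Fourier expansion over `n` produces the theta function: only odd `n` contribute. -/
theorem tsum_fourierTerm (τ₁ τ₂ τ₃ : ℂ) (m : ℤ) :
    ∑' n : ℤ, fourierTerm τ₁ τ₂ τ₃ n m = jacobiTerm τ₁ τ₂ τ₃ m := by
  have hinj : Function.Injective fun k : ℤ => 2 * k + 1 := fun a b h => by
    simp only at h
    omega
  have hsupp : Function.support (fun n : ℤ => fourierTerm τ₁ τ₂ τ₃ n m) ⊆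
      Set.range fun k : ℤ => 2 * k + 1 := by
    intro n hn
    rcases Int.even_or_odd n with h | ⟨k, hk⟩
    · refine absurd ?_ hn
      have : chi4 n = 0 := by
        obtain ⟨j, rfl⟩ := h
        rw [chi4, if_neg (by omega), if_neg (by omega)]
      simp [fourierTerm, this]
    · exact ⟨k, hk.symm⟩
  rw [← hinj.tsum_eq hsupp, jacobiTerm, jacobiTheta11, ← tsum_mul_left, ← tsum_mul_right]
  refine tsum_congr fun k => ?_
  rw [fourierTerm, chi4_odd]
  have : (Real.pi * Complex.I * (((2 * k + 1 : ℤ) : ℂ) ^ 2 * τ₁ / 4 +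
      ((2 * k + 1 : ℤ) : ℂ) * (m : ℂ) * τ₂ + (m : ℂ) ^ 2 * τ₃)) =
      (Real.pi * Complex.I * ((k : ℂ) + 1 / 2) ^ 2 * τ₁ +
        (2 * (k : ℂ) + 1) * Real.pi * Complex.I * ((m : ℂ) * τ₂)) +
      Real.pi * Complex.I * (m : ℂ) ^ 2 * τ₃ := by
    push_cast
    ring
  rw [this, Complex.exp_add]
  ring

theorem jacobiTerm_neg (τ₁ τ₂ τ₃ : ℂ) (m : ℤ) :
    jacobiTerm τ₁ τ₂ τ₃ (-m) = jacobiTerm τ₁ τ₂ τ₃ m := by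
  rw [← tsum_fourierTerm, ← tsum_fourierTerm, ← (Equiv.neg ℤ).tsum_eq]
  exact tsum_congr fun n => fourierTerm_neg τ₁ τ₂ τ₃ n m

theorem summable_norm_jacobiTerm {τ₁ τ₂ τ₃ : ℂ}
    (h1 : 0 < τ₁.im) (h3 : 0 < τ₃.im) (hpos : (τ₂.im) ^ 2 < τ₁.im * τ₃.im) :
    Summable fun m : ℤ => ‖jacobiTerm τ₁ τ₂ τ₃ m‖ := by
  have hs := (summable_norm_fourierTerm h1 h3 hpos).prod_symm
  refine Summable.of_nonneg_of_le (fun _ => norm_nonneg _) (fun m => ?_) hs.prod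
  rw [← tsum_fourierTerm]
  exact norm_tsum_le_tsum_norm (hs.prod_factor m)

/-- For `(τ₁ τ₂; τ₂ τ₃)` in the Siegel upper half space of degree 2,
`(1/2)·∑_{(n,m)∈ℤ²} χ₄(n)χ₄(m) exp(πi(n²τ₁/4 + nmτ₂ + m²τ₃))
  = ∑_{m≥1} χ₄(m)·ϑ(τ₁, mτ₂)·exp(πi m² τ₃)`,
both series converging absolutely.  (The term `m = 0` on the right contributes `0` since
`χ₄(0) = 0`, so the sum over `ℕ` equals the sum over `m ≥ 1`.) -/
theorem theta_constant_fourier_jacobi_expansion (τ₁ τ₂ τ₃ : ℂ)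
    (h1 : 0 < τ₁.im) (h3 : 0 < τ₃.im) (hpos : (τ₂.im) ^ 2 < τ₁.im * τ₃.im) :
    (Summable fun p : ℤ × ℤ =>
        ‖chi4 p.1 * chi4 p.2 * Complex.exp (Real.pi * Complex.I *
          ((p.1 : ℂ) ^ 2 * τ₁ / 4 + (p.1 : ℂ) * (p.2 : ℂ) * τ₂ + (p.2 : ℂ) ^ 2 * τ₃))‖) ∧
    (Summable fun m : ℕ =>
        ‖chi4 m * jacobiTheta11 τ₁ ((m : ℂ) * τ₂) *
          Complex.exp (Real.pi * Complex.I * (m : ℂ) ^ 2 * τ₃)‖) ∧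
    (1 / 2 : ℂ) * (∑' p : ℤ × ℤ,
        chi4 p.1 * chi4 p.2 * Complex.exp (Real.pi * Complex.I *
          ((p.1 : ℂ) ^ 2 * τ₁ / 4 + (p.1 : ℂ) * (p.2 : ℂ) * τ₂ + (p.2 : ℂ) ^ 2 * τ₃))) =
      ∑' m : ℕ, chi4 m * jacobiTheta11 τ₁ ((m : ℂ) * τ₂) *
        Complex.exp (Real.pi * Complex.I * (m : ℂ) ^ 2 * τ₃) := by
  have hF := summable_norm_fourierTerm h1 h3 hpos
  have hJ := summable_norm_jacobiTerm h1 h3 hpos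
  have hJN : Summable fun m : ℕ => ‖jacobiTerm τ₁ τ₂ τ₃ m‖ :=
    hJ.comp_injective (i := fun m : ℕ => (m : ℤ)) Nat.cast_injective
  have hnat (m : ℕ) : jacobiTerm τ₁ τ₂ τ₃ m = chi4 m * jacobiTheta11 τ₁ ((m : ℂ) * τ₂) *
      Complex.exp (Real.pi * Complex.I * (m : ℂ) ^ 2 * τ₃) := by
    simp [jacobiTerm]
  have hsum : ∑' p : ℤ × ℤ, fourierTerm τ₁ τ₂ τ₃ p.1 p.2 =
      2 * ∑' m : ℕ, jacobiTerm τ₁ τ₂ τ₃ m := by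
    rw [← (Equiv.prodComm ℤ ℤ).tsum_eq]
    refine (Summable.tsum_prod hF.of_norm.prod_symm).trans ?_
    have hzero : jacobiTerm τ₁ τ₂ τ₃ 0 = 0 := by simp [jacobiTerm, chi4_zero]
    have hint := (hJN.of_norm.hasSum.of_nat_of_neg (f := jacobiTerm τ₁ τ₂ τ₃)
      (by simpa only [jacobiTerm_neg] using hJN.of_norm.hasSum)).tsum_eq
    simp only [Prod.fst_swap, Prod.snd_swap, tsum_fourierTerm]
    rw [hint, hzero]
    ring
  refine ⟨hF, by simpa only [hnat] using hJN, ?_⟩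
  simp only [← hnat]
  change (1 / 2 : ℂ) * (∑' p : ℤ × ℤ, fourierTerm τ₁ τ₂ τ₃ p.1 p.2) = _
  rw [hsum]
  ring
end

section
/- Let τ ∈ ℂ with Im τ > 0 and let z ∈ ℂ; set q = exp(2πiτ) and r = exp(2πiz). Then ϑ(τ, 2z)² = r⁻¹ · ϑ(τ, z)² · ( ∏_{n=1}^∞ (1 + q^{n−1} r)(1 + qⁿ r⁻¹)(1 − q^{2n−1} r²)(1 − q^{2n−1} r⁻²) )², where the infinite product converges absolutely. -/
/-!
Both sides are evaluated through the product expansion of `ϑ`. With `q = e^{2πiτ}` and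
`r = e^{2πiz}`, the Jacobi triple product gives
`ϑ(τ,z) = (q)_∞ · e^{πiτ/4 + πiz} · P(r)`, where
`P(x) = ∏_{k ≥ 0} (1 - q^k x⁻¹)(1 - q^{k+1} x)`.
Comparing the values at `z` and `2z`, the constant `(q)_∞` drops out, and what remains is
`r · P(r²) = P(r) · ∏ borcherdsFactor`. This follows by splitting the factors of `P(r²)` into those
with even exponents of `q`, which factor as differences of squares, and those with odd exponents;
it is proved for partial products (`partial_duplication`) and then passed to the limit.

The triple product (`triple_product`) is obtained from its finite form. The `q`-binomial theorem
(`q_binomial`) writes the partial products of `P` as finite sums of the theta terms weighted by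
`(q)_{2n} / ((q)_{n+m} (q)_{n-m})`. These weights are uniformly bounded and tend to `1 / (q)_∞`,
so dominated convergence applies.
-/

open Complex

/-- The `n`-th factor (`n ≥ 1`, here indexed by `n - 1 ∈ ℕ`) of the Borcherds-type product:
`(1 + q^{n-1} r)(1 + qⁿ r⁻¹)(1 - q^{2n-1} r²)(1 - q^{2n-1} r⁻²)` with
`q = e^{2πiτ}`, `r = e^{2πiz}`. -/
noncomputable def borcherdsFactor (τ z : ℂ) (n : ℕ) : ℂ :=
  (1 + Complex.exp (2 * Real.pi * Complex.I * τ) ^ n *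
      Complex.exp (2 * Real.pi * Complex.I * z)) *
  (1 + Complex.exp (2 * Real.pi * Complex.I * τ) ^ (n + 1) *
      (Complex.exp (2 * Real.pi * Complex.I * z))⁻¹) *
  (1 - Complex.exp (2 * Real.pi * Complex.I * τ) ^ (2 * n + 1) *
      Complex.exp (2 * Real.pi * Complex.I * z) ^ 2) *
  (1 - Complex.exp (2 * Real.pi * Complex.I * τ) ^ (2 * n + 1) *
      ((Complex.exp (2 * Real.pi * Complex.I * z)) ^ 2)⁻¹)

open Filter Topology Finset

/-! ### Finite `q`-products and the `q`-binomial theorem -/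

/-- The finite `q`-Pochhammer symbol `(q)_n = ∏_{k=1}^n (1 - q^k)`. -/
noncomputable def qPoch (q : ℂ) (n : ℕ) : ℂ := ∏ k ∈ range n, (1 - q ^ (k + 1))

/-- The factor of index `k` in the product `∏ (1 - q^k x⁻¹)(1 - q^{k+1} x)`. -/
noncomputable def tripleFactor (q x : ℂ) (k : ℕ) : ℂ := (1 - q ^ k * x⁻¹) * (1 - q ^ (k + 1) * x)

lemma qPoch_succ (q : ℂ) (n : ℕ) : qPoch q (n + 1) = qPoch q n * (1 - q ^ (n + 1)) :=
  prod_range_succ _ _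

lemma one_sub_pow_ne_zero {q : ℂ} (hq : ‖q‖ < 1) (n : ℕ) : 1 - q ^ (n + 1) ≠ 0 := by
  intro h
  have h1 : ‖q ^ (n + 1)‖ = 1 := by rw [← sub_eq_zero.mp h, norm_one]
  rw [norm_pow] at h1
  exact (pow_lt_one₀ (norm_nonneg _) hq (Nat.succ_ne_zero n)).ne h1

lemma qPoch_ne_zero {q : ℂ} (hq : ‖q‖ < 1) (n : ℕ) : qPoch q n ≠ 0 :=
  prod_ne_zero_iff.mpr fun k _ => one_sub_pow_ne_zero hq k

lemma qPoch_tendsto {q : ℂ} (hq : ‖q‖ < 1) :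
    ∃ L : ℂ, L ≠ 0 ∧ Tendsto (qPoch q) atTop (𝓝 L) := by
  have hs : Summable fun n : ℕ => ‖-q ^ (n + 1)‖ := by
    simpa using (summable_nat_add_iff 1).mpr (summable_geometric_of_lt_one (norm_nonneg _) hq)
  refine ⟨∏' n : ℕ, (1 + -q ^ (n + 1)), ?_, ?_⟩
  · exact tprod_one_add_ne_zero_of_summable
      (fun i => by simpa [← sub_eq_add_neg] using one_sub_pow_ne_zero hq i) hs
  · have := (multipliable_one_add_of_summable hs).tendsto_prod_tprod_nat
    simp only [← sub_eq_add_neg] at this ⊢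
    exact this

/-- The `q`-binomial theorem, with the terms `q^{i(i-1)/2} y^i / (q)_i` given by their recursion. -/
lemma q_binomial {q y : ℂ} (hq : ‖q‖ < 1) (u : ℕ → ℂ)
    (hu : ∀ i, (1 - q ^ (i + 1)) * u (i + 1) = q ^ i * y * u i) (N : ℕ) :
    qPoch q N * ∑ p ∈ antidiagonal N, u p.1 * (qPoch q p.2)⁻¹ =
      u 0 * ∏ k ∈ range N, (1 + y * q ^ k) := by
  have hv : ∀ j, (1 - q ^ (j + 1)) * (qPoch q (j + 1))⁻¹ = (qPoch q j)⁻¹ := by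
    intro j
    have := one_sub_pow_ne_zero hq j
    have := qPoch_ne_zero hq j
    rw [qPoch_succ]
    field_simp
  induction N with
  | zero => simp [qPoch]
  | succ N ih =>
    have key : (1 - q ^ (N + 1)) * ∑ p ∈ antidiagonal (N + 1), u p.1 * (qPoch q p.2)⁻¹ =
        (1 + y * q ^ N) * ∑ p ∈ antidiagonal N, u p.1 * (qPoch q p.2)⁻¹ := by
      -- Split `1 - q^{i+j} = (1 - q^j) + q^j (1 - q^i)` on the antidiagonal `i + j = N + 1`.
      have h1 : (1 - q ^ (N + 1)) * ∑ p ∈ antidiagonal (N + 1), u p.1 * (qPoch q p.2)⁻¹ =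
          ∑ p ∈ antidiagonal (N + 1), u p.1 * ((1 - q ^ p.2) * (qPoch q p.2)⁻¹) +
          ∑ p ∈ antidiagonal (N + 1), q ^ p.2 * ((1 - q ^ p.1) * u p.1) * (qPoch q p.2)⁻¹ := by
        rw [mul_sum, ← sum_add_distrib]
        refine sum_congr rfl fun p hp => ?_
        rw [← mem_antidiagonal.mp hp, pow_add]
        ring
      rw [h1, Finset.Nat.sum_antidiagonal_succ', Finset.Nat.sum_antidiagonal_succ]
      simp only [pow_zero, sub_self, zero_mul, mul_zero, zero_add, hv, hu]
      rw [mul_sum, ← sum_add_distrib]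
      refine sum_congr rfl fun p hp => ?_
      rw [← mem_antidiagonal.mp hp, pow_add]
      ring
    rw [qPoch_succ, mul_assoc, key, prod_range_succ, ← mul_assoc (u 0), ← ih]
    ring

/-! ### The finite triple product -/

/-- Centering the `q`-binomial product: the recursion of `T` absorbs the powers of `q` and `x`
produced by rewriting `1 - q^{-k} x` as a multiple of `1 - q^k x⁻¹`. -/
lemma centered_prod {q x : ℂ} (hq0 : q ≠ 0) (hx : x ≠ 0) (T : ℤ → ℂ)
    (hT : ∀ m, T (m + 1) = -(q ^ (m + 1) * x) * T m) (n : ℕ) :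
    T (-n) * ∏ k ∈ range (2 * n), (1 + -(q ^ (1 - n : ℤ) * x) * q ^ k) =
      T 0 * ∏ k ∈ range n, tripleFactor q x k := by
  induction n with
  | zero => simp
  | succ n ih =>
    have h := hT (-(n + 1 : ℕ))
    have e : (-((n + 1 : ℕ) : ℤ) + 1) = -(n : ℤ) := by push_cast; ring
    rw [e] at h
    rw [prod_range_succ _ n, ← mul_assoc, ← ih, show 2 * (n + 1) = 2 * n + 1 + 1 by ring,
      prod_range_succ', prod_range_succ]
    have h2 : ∀ k : ℕ, -(q ^ (1 - (n + 1 : ℕ) : ℤ) * x) * q ^ (k + 1) =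
        -(q ^ (1 - n : ℤ) * x) * q ^ k := by
      intro k
      have : (1 - (n : ℤ)) = (1 - (n + 1 : ℕ) : ℤ) + 1 := by push_cast; ring
      rw [this, zpow_add_one₀ hq0]
      ring
    simp only [h2]
    have h3 : q ^ (1 - n : ℤ) * q ^ (2 * n) = q ^ (n + 1) := by
      rw [← zpow_natCast, ← zpow_add₀ hq0, ← zpow_natCast]
      congr 1
      push_cast
      ring
    have h4 : q ^ (1 - (n + 1 : ℕ) : ℤ) = (q ^ n)⁻¹ := by
      rw [← zpow_natCast, ← zpow_neg]
      congr 1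
    rw [zpow_neg, zpow_natCast] at h
    have h5 : T (-(n + 1 : ℕ)) * (1 + -(q ^ (1 - (n + 1 : ℕ) : ℤ) * x) * q ^ 0) =
        T (-n) * (1 - q ^ n * x⁻¹) := by
      rw [h, h4]
      field_simp
      ring
    have h6 : 1 + -(q ^ (1 - n : ℤ) * x) * q ^ (2 * n) = 1 - q ^ (n + 1) * x := by
      rw [← h3]
      ring
    rw [h6, tripleFactor]
    linear_combination (∏ k ∈ range (2 * n), (1 + -(q ^ (1 - n : ℤ) * x) * q ^ k)) *
      (1 - q ^ (n + 1) * x) * h5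

/-- The theta term `T m` weighted by `(q)_{2n} / ((q)_{n+m} (q)_{n-m})`, and `0` for `|m| > n`. -/
noncomputable def weightedTerm (q : ℂ) (T : ℤ → ℂ) (n : ℕ) (m : ℤ) : ℂ :=
  if m ∈ Icc (-n : ℤ) n then
    T m * (qPoch q (2 * n) * (qPoch q (m + n).toNat)⁻¹ * (qPoch q (n - m).toNat)⁻¹) else 0

/-- The finite form of the Jacobi triple product. -/
lemma finite_triple_product {q x : ℂ} (hq0 : q ≠ 0) (hq : ‖q‖ < 1) (hx : x ≠ 0) (T : ℤ → ℂ)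
    (hT : ∀ m, T (m + 1) = -(q ^ (m + 1) * x) * T m) (n : ℕ) :
    ∑' m, weightedTerm q T n m = T 0 * ∏ k ∈ range n, tripleFactor q x k := by
  have hb := q_binomial (y := -(q ^ (1 - n : ℤ) * x)) hq
    (fun i => T (i - n) * (qPoch q i)⁻¹) (fun i => by
      have e : ((i + 1 : ℕ) : ℤ) - n = (i - n : ℤ) + 1 := by push_cast; ring
      have e2 : (i - n : ℤ) + 1 = (1 - n : ℤ) + (i : ℤ) := by ring
      simp only [e]
      rw [hT, qPoch_succ, e2, zpow_add₀ hq0, zpow_natCast]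
      have := one_sub_pow_ne_zero hq i
      have := qPoch_ne_zero hq i
      field_simp) (2 * n)
  have h0 : qPoch q 0 = 1 := by simp [qPoch]
  simp only [Nat.cast_zero, zero_sub, h0, inv_one, mul_one] at hb
  rw [centered_prod hq0 hx T hT] at hb
  rw [← hb, tsum_eq_sum (s := Icc (-n : ℤ) n) (fun m hm => by rw [weightedTerm, if_neg hm]),
    mul_sum]
  symm
  refine sum_bij (fun p _ => (p.1 : ℤ) - n) ?_ ?_ ?_ ?_
  · intro p hp
    have := mem_antidiagonal.mp hp
    rw [mem_Icc]
    omega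
  · intro p hp p' hp' h
    have := mem_antidiagonal.mp hp
    have := mem_antidiagonal.mp hp'
    ext <;> omega
  · intro m hm
    rw [mem_Icc] at hm
    exact ⟨((m + n).toNat, (n - m).toNat), by
      rw [HasAntidiagonal.mem_antidiagonal]
      omega, by simp only; omega⟩
  · intro p hp
    have := mem_antidiagonal.mp hp
    have h1 : (p.1 : ℤ) - n ∈ Icc (-n : ℤ) n := by rw [mem_Icc]; omega
    have h2 : ((p.1 : ℤ) - n + n).toNat = p.1 := by omega
    have h3 : ((n : ℤ) - (p.1 - n)).toNat = p.2 := by omega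
    rw [weightedTerm, if_pos h1, h2, h3]
    ring

/-! ### The Jacobi triple product -/

lemma summable_norm_mul_sub_one {u v : ℕ → ℂ} (hu : Summable fun n => ‖u n - 1‖)
    (hv : Summable fun n => ‖v n - 1‖) : Summable fun n => ‖u n * v n - 1‖ := by
  have h : Summable fun n => ‖u n - 1‖ * (∑' k, ‖v k - 1‖) + ‖u n - 1‖ + ‖v n - 1‖ :=
    ((hu.mul_right _).add hu).add hv
  refine h.of_nonneg_of_le (fun _ => norm_nonneg _) fun n => ?_
  have e : u n * v n - 1 = (u n - 1) * (v n - 1) + (u n - 1) + (v n - 1) := by ring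
  rw [e]
  refine (norm_add₃_le).trans ?_
  rw [norm_mul]
  gcongr
  exact hv.le_tsum n (fun _ _ => norm_nonneg _)

lemma summable_norm_tripleFactor {q : ℂ} (hq : ‖q‖ < 1) (x : ℂ) :
    Summable fun n => ‖tripleFactor q x n - 1‖ := by
  have hg := summable_geometric_of_lt_one (norm_nonneg q) hq
  refine summable_norm_mul_sub_one ?_ ?_
  · simpa using hg.mul_right ‖x‖⁻¹
  · simpa using ((summable_nat_add_iff 1).mpr hg).mul_right ‖x‖

lemma tendsto_prod_of_summable {u : ℕ → ℂ} (hu : Summable fun n => ‖u n - 1‖) :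
    Tendsto (fun n => ∏ k ∈ range n, u k) atTop (𝓝 (∏' k, u k)) := by
  have := (multipliable_one_add_of_summable hu).tendsto_prod_tprod_nat
  simpa using this

/-- The Jacobi triple product, for any summable sequence `T` satisfying the recursion of the
theta terms. The constant `L = (q)_∞` does not depend on `x` or `T`. -/
lemma triple_product {q : ℂ} (hq0 : q ≠ 0) (hq : ‖q‖ < 1) : ∃ L : ℂ, ∀ (x : ℂ) (T : ℤ → ℂ),
    x ≠ 0 → (∀ m, T (m + 1) = -(q ^ (m + 1) * x) * T m) → (Summable fun m => ‖T m‖) →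
    ∑' m, T m = L * T 0 * ∏' k, tripleFactor q x k := by
  obtain ⟨L, hL, hlim⟩ := qPoch_tendsto hq
  refine ⟨L, fun x T hx hT hs => ?_⟩
  obtain ⟨C, hC⟩ := (Metric.isBounded_range_of_tendsto _ hlim).exists_norm_le
  obtain ⟨D, hD⟩ := (Metric.isBounded_range_of_tendsto _ (hlim.inv₀ hL)).exists_norm_le
  replace hC : ∀ n, ‖qPoch q n‖ ≤ C := fun n => hC _ ⟨n, rfl⟩
  replace hD : ∀ n, ‖(qPoch q n)⁻¹‖ ≤ D := fun n => hD _ ⟨n, rfl⟩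
  have hC0 : 0 ≤ C := (norm_nonneg _).trans (hC 0)
  have hD0 : 0 ≤ D := (norm_nonneg _).trans (hD 0)
  have t1 : Tendsto (fun n => ∑' m, weightedTerm q T n m) atTop (𝓝 (∑' m, T m * L⁻¹)) := by
    refine tendsto_tsum_of_dominated_convergence (hs.mul_right (C * D * D)) ?_ ?_
    · intro m
      have a1 : Tendsto (fun n : ℕ => 2 * n) atTop atTop :=
        tendsto_atTop_mono (fun n => Nat.le_mul_of_pos_left n two_pos) tendsto_id
      have a2 : Tendsto (fun n : ℕ => (m + n).toNat) atTop atTop :=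
        tendsto_atTop.mpr fun b => (eventually_ge_atTop (b + m.natAbs)).mono fun n hn => by omega
      have a3 : Tendsto (fun n : ℕ => (n - m).toNat) atTop atTop :=
        tendsto_atTop.mpr fun b => (eventually_ge_atTop (b + m.natAbs)).mono fun n hn => by omega
      have a4 := ((((hlim.comp a1).mul ((hlim.comp a2).inv₀ hL)).mul
        ((hlim.comp a3).inv₀ hL))).const_mul (T m)
      rw [mul_inv_cancel₀ hL, one_mul] at a4
      refine a4.congr' ?_
      filter_upwards [eventually_ge_atTop m.natAbs] with n hn
      have : m ∈ Icc (-n : ℤ) n := by rw [mem_Icc]; omega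
      rw [weightedTerm, if_pos this]
      rfl
    · refine Eventually.of_forall fun n m => ?_
      rw [weightedTerm]
      split_ifs
      · rw [norm_mul, norm_mul, norm_mul]
        gcongr
        exacts [hC _, hD _, hD _]
      · rw [norm_zero]
        positivity
  have t2 := (tendsto_prod_of_summable (summable_norm_tripleFactor hq x)).const_mul (T 0)
  have h := tendsto_nhds_unique t1
    (t2.congr fun n => (finite_triple_product hq0 hq hx T hT n).symm)
  rw [tsum_mul_right] at h
  rw [mul_assoc, ← h]
  field_simp

/-! ### The theta series -/

/-- The summand of index `m` in the series defining `ϑ(τ,z)`. -/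
noncomputable def thetaTerm (τ z : ℂ) (m : ℤ) : ℂ :=
  (-1 : ℂ) ^ m * Complex.exp (Real.pi * Complex.I * ((m : ℂ) + 1 / 2) ^ 2 * τ +
      (2 * (m : ℂ) + 1) * Real.pi * Complex.I * z)

lemma thetaTerm_succ (τ z : ℂ) (m : ℤ) :
    thetaTerm τ z (m + 1) = -(Complex.exp (2 * Real.pi * Complex.I * τ) ^ (m + 1) *
      Complex.exp (2 * Real.pi * Complex.I * z)) * thetaTerm τ z m := by
  rw [thetaTerm, thetaTerm, zpow_add_one₀ (by norm_num : (-1 : ℂ) ≠ 0), ← Complex.exp_int_mul,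
    ← Complex.exp_add, mul_neg_one, neg_mul, neg_mul, mul_left_comm, ← Complex.exp_add]
  congr 3
  push_cast
  ring

/-- Up to a constant, the terms are those of Mathlib's `jacobiTheta₂` at `z + 1/2 + τ/2`. -/
lemma summable_norm_thetaTerm {τ : ℂ} (hτ : 0 < τ.im) (z : ℂ) :
    Summable fun m => ‖thetaTerm τ z m‖ := by
  have h := (((summable_jacobiTheta₂_term_iff (z + 1 / 2 + τ / 2) τ).mpr hτ).mul_left
    (Complex.exp (Real.pi * Complex.I * τ / 4 + Real.pi * Complex.I * z))).norm
  refine h.congr fun m => ?_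
  congr 1
  rw [thetaTerm, jacobiTheta₂_term, ← Complex.exp_pi_mul_I, ← Complex.exp_int_mul,
    ← Complex.exp_add, ← Complex.exp_add]
  congr 1
  ring

/-! ### Duplication of the product -/

/-- The finite form of `r · P(r²) = P(r) · ∏ borcherdsFactor`. The last factors on both sides
account for the shift between `∏ (1 + q^k r⁻¹)(1 + q^{k+1} r)` and
`∏ (1 + q^k r)(1 + q^{k+1} r⁻¹)`. -/
lemma partial_duplication (τ z : ℂ) (n : ℕ) :
    Complex.exp (2 * Real.pi * Complex.I * z) *
      (∏ k ∈ range (2 * n), tripleFactor (Complex.exp (2 * Real.pi * Complex.I * τ))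
        (Complex.exp (2 * Real.pi * Complex.I * z) ^ 2) k) *
      (1 + Complex.exp (2 * Real.pi * Complex.I * τ) ^ n *
        (Complex.exp (2 * Real.pi * Complex.I * z))⁻¹) =
    (∏ k ∈ range n, tripleFactor (Complex.exp (2 * Real.pi * Complex.I * τ))
        (Complex.exp (2 * Real.pi * Complex.I * z)) k) *
      (∏ k ∈ range n, borcherdsFactor τ z k) *
      (1 + Complex.exp (2 * Real.pi * Complex.I * τ) ^ n *
        Complex.exp (2 * Real.pi * Complex.I * z)) := by
  simp only [borcherdsFactor]
  have hr := Complex.exp_ne_zero (2 * Real.pi * Complex.I * z)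
  generalize Complex.exp (2 * Real.pi * Complex.I * z) = r at *
  generalize Complex.exp (2 * Real.pi * Complex.I * τ) = q at *
  induction n with
  | zero => simp; field_simp; ring
  | succ n ih =>
    have e1 : tripleFactor q (r ^ 2) (2 * n) = (1 - q ^ n * r⁻¹) * (1 + q ^ n * r⁻¹) *
        (1 - q ^ (2 * n + 1) * r ^ 2) := by
      rw [tripleFactor, ← inv_pow]
      ring
    have e2 : tripleFactor q (r ^ 2) (2 * n + 1) = (1 - q ^ (2 * n + 1) * (r ^ 2)⁻¹) *
        ((1 - q ^ (n + 1) * r) * (1 + q ^ (n + 1) * r)) := by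
      rw [tripleFactor]
      ring
    rw [show 2 * (n + 1) = 2 * n + 1 + 1 by ring, prod_range_succ, prod_range_succ,
      prod_range_succ, prod_range_succ, e1, e2]
    simp only [tripleFactor] at ih ⊢
    linear_combination (1 - q ^ n * r⁻¹) * (1 - q ^ (2 * n + 1) * r ^ 2) *
      (1 - q ^ (2 * n + 1) * (r ^ 2)⁻¹) * (1 - q ^ (n + 1) * r) * (1 + q ^ (n + 1) * r) *
      (1 + q ^ (n + 1) * r⁻¹) * ih

lemma norm_exp_two_pi_I_mul_lt_one {τ : ℂ} (hτ : 0 < τ.im) :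
    ‖Complex.exp (2 * Real.pi * Complex.I * τ)‖ < 1 := by
  rw [Complex.norm_exp, Real.exp_lt_one_iff]
  have : (2 * Real.pi * Complex.I * τ).re = -(2 * Real.pi * τ.im) := by simp
  rw [this]
  have := Real.pi_pos
  simp only [Left.neg_neg_iff]
  positivity

lemma summable_norm_borcherdsFactor {τ : ℂ} (hτ : 0 < τ.im) (z : ℂ) :
    Summable fun n => ‖borcherdsFactor τ z n - 1‖ := by
  have hq := norm_exp_two_pi_I_mul_lt_one hτ
  have hg := summable_geometric_of_lt_one (norm_nonneg _) hq
  have hodd : Function.Injective fun n : ℕ => 2 * n + 1 := fun a b h => by simpa using h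
  refine summable_norm_mul_sub_one (summable_norm_mul_sub_one
    (summable_norm_mul_sub_one ?_ ?_) ?_) ?_
  · simpa only [add_sub_cancel_left, norm_mul, norm_pow] using hg.mul_right _
  · simpa only [add_sub_cancel_left, norm_mul, norm_pow] using
      ((summable_nat_add_iff 1).mpr hg).mul_right _
  · simpa only [sub_sub_cancel_left, norm_neg, norm_mul, norm_pow, Function.comp_def] using
      (hg.comp_injective hodd).mul_right _
  · simpa only [sub_sub_cancel_left, norm_neg, norm_mul, norm_pow, Function.comp_def] using
      (hg.comp_injective hodd).mul_right _

lemma duplication {τ : ℂ} (hτ : 0 < τ.im) (z : ℂ) :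
    Complex.exp (2 * Real.pi * Complex.I * z) *
      (∏' k, tripleFactor (Complex.exp (2 * Real.pi * Complex.I * τ))
        (Complex.exp (2 * Real.pi * Complex.I * z) ^ 2) k) =
    (∏' k, tripleFactor (Complex.exp (2 * Real.pi * Complex.I * τ))
        (Complex.exp (2 * Real.pi * Complex.I * z)) k) * ∏' k, borcherdsFactor τ z k := by
  have hq := norm_exp_two_pi_I_mul_lt_one hτ
  have a1 : Tendsto (fun n : ℕ => 2 * n) atTop atTop :=
    tendsto_atTop_mono (fun n => Nat.le_mul_of_pos_left n two_pos) tendsto_id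
  have hpow := tendsto_pow_atTop_nhds_zero_of_norm_lt_one hq
  have l1 := (((tendsto_prod_of_summable (summable_norm_tripleFactor hq
    (Complex.exp (2 * Real.pi * Complex.I * z) ^ 2))).comp a1).const_mul
      (Complex.exp (2 * Real.pi * Complex.I * z))).mul
      ((hpow.mul_const (Complex.exp (2 * Real.pi * Complex.I * z))⁻¹).const_add 1)
  have l2 := ((tendsto_prod_of_summable (summable_norm_tripleFactor hq
    (Complex.exp (2 * Real.pi * Complex.I * z)))).mul
      (tendsto_prod_of_summable (summable_norm_borcherdsFactor hτ z))).mul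
      ((hpow.mul_const (Complex.exp (2 * Real.pi * Complex.I * z))).const_add 1)
  have := tendsto_nhds_unique l1 (l2.congr fun n => (partial_duplication τ z n).symm)
  simpa using this

/-- For `τ` in the upper half plane and `z ∈ ℂ`, with `q = e^{2πiτ}` and
`r = e^{2πiz}`:
`ϑ(τ,2z)² = r⁻¹ · ϑ(τ,z)² · (∏_{n≥1} (1+q^{n-1}r)(1+qⁿr⁻¹)(1-q^{2n-1}r²)(1-q^{2n-1}r⁻²))²`,
the infinite product converging absolutely. -/
theorem theta_quotient_product_expansion (τ z : ℂ) (hτ : 0 < τ.im) :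
    (Summable fun n : ℕ => ‖borcherdsFactor τ z n - 1‖) ∧
    (jacobiTheta11 τ (2 * z)) ^ 2 =
      (Complex.exp (2 * Real.pi * Complex.I * z))⁻¹ * (jacobiTheta11 τ z) ^ 2 *
        (∏' n : ℕ, borcherdsFactor τ z n) ^ 2 := by
  refine ⟨summable_norm_borcherdsFactor hτ z, ?_⟩
  obtain ⟨L, hL⟩ := triple_product (Complex.exp_ne_zero (2 * Real.pi * Complex.I * τ))
    (norm_exp_two_pi_I_mul_lt_one hτ)
  have hθ : ∀ w, jacobiTheta11 τ w = L * thetaTerm τ w 0 *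
      ∏' k, tripleFactor (Complex.exp (2 * Real.pi * Complex.I * τ))
        (Complex.exp (2 * Real.pi * Complex.I * w)) k := fun w =>
    hL _ (thetaTerm τ w) (Complex.exp_ne_zero _) (thetaTerm_succ τ w)
      (summable_norm_thetaTerm hτ w)
  have hr := Complex.exp_ne_zero (2 * Real.pi * Complex.I * z)
  have h2 : Complex.exp (2 * Real.pi * Complex.I * (2 * z)) =
      Complex.exp (2 * Real.pi * Complex.I * z) ^ 2 := by
    rw [← Complex.exp_nat_mul]
    congr 1
    push_cast
    ring
  have h0 : thetaTerm τ (2 * z) 0 ^ 2 =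
      Complex.exp (2 * Real.pi * Complex.I * z) * thetaTerm τ z 0 ^ 2 := by
    simp only [thetaTerm, zpow_zero, one_mul]
    rw [← Complex.exp_nat_mul, ← Complex.exp_nat_mul, ← Complex.exp_add]
    congr 1
    push_cast
    ring
  have hd := congrArg (· ^ 2) (duplication hτ z)
  simp only [mul_pow] at hd
  rw [hθ, hθ, h2]
  simp only [mul_pow]
  rw [h0]
  field_simp
  linear_combination L ^ 2 * thetaTerm τ z 0 ^ 2 * hd
end
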